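/- Let I ⊆ ℝ be a nondegenerate interval, n ∈ ℕ, let ω = (ω_1,…,ω_n) be an n-dimensional positive Chebyshev system over I, and let ω_{n+1} : I → ℝ be such that ω* = (ω_1,…,ω_n,ω_{n+1}) is an (n+1)-dimensional positive Chebyshev system over I. Then a function f : I → ℝ is ω-Jensen convex on I if and only if D̲_{(𝟏_n,ω*)} f(p) ≥ 0 for all p ∈ I. -/

import Mathlib

/-- `Phi ω x` is the determinant `det(ωᵢ(xⱼ))` of an `n`-tuple of functions
evaluated at an `n`-tuple of points. -/
noncomputable def Phi {n : ℕ} (ω : Fin n → ℝ → ℝ) (x : Fin n → ℝ) : ℝ :=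
  (Matrix.of fun i j => ω i (x j)).det

/-- `ω` is an `n`-dimensional positive Chebyshev system over `H`:
`Phi ω` is positive on all strictly increasing `n`-tuples of elements of `H`. -/
def IsPosChebyshev {n : ℕ} (ω : Fin n → ℝ → ℝ) (H : Set ℝ) : Prop :=
  ∀ x : Fin n → ℝ, StrictMono x → (∀ j, x j ∈ H) → 0 < Phi ω x

/-- The generalized `ω*`-divided difference `[x₀,…,xₙ; f]_{ω*}`, where
`ω* = (ω₁,…,ωₙ,ω')`:  `Φ_{(ω,f)}(x) / Φ_{ω*}(x)`. -/
noncomputable def divDiff {n : ℕ} (ω : Fin n → ℝ → ℝ) (ω' : ℝ → ℝ) (f : ℝ → ℝ)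
    (x : Fin (n + 1) → ℝ) : ℝ :=
  Phi (Fin.snoc ω f) x / Phi (Fin.snoc ω ω') x

/-- The partial sum `t₁ + ⋯ + tⱼ` (empty for `j = 0`, everything for `j = n`). -/
noncomputable def psum {n : ℕ} (t : Fin n → ℝ) (j : Fin (n + 1)) : ℝ :=
  ∑ i ∈ Finset.univ.filter (fun i : Fin n => (i : ℕ) < (j : ℕ)), t i

/-- `f` is `(t,ω)`-convex on `J`:
`Φ_{(ω,f)}(x, x+t₁h, x+(t₁+t₂)h, …, x+(t₁+⋯+tₙ)h) ≥ 0`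
for all `x ∈ J` and `h > 0` with `x+(t₁+⋯+tₙ)h ∈ J`. -/
def TOmegaConvexOn {n : ℕ} (ω : Fin n → ℝ → ℝ) (t : Fin n → ℝ) (J : Set ℝ) (f : ℝ → ℝ) : Prop :=
  ∀ x ∈ J, ∀ h : ℝ, 0 < h → x + psum t (Fin.last n) * h ∈ J →
    0 ≤ Phi (Fin.snoc ω f) (fun j => x + psum t j * h)

/-- The tuple `x, ((T−s₁)x+s₁y)/T, …, ((T−s_{n−1})x+s_{n−1}y)/T, y`
where `sⱼ = t₁+⋯+tⱼ` and `T = sₙ`. -/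
noncomputable def jpts {n : ℕ} (t : Fin n → ℝ) (x y : ℝ) : Fin (n + 1) → ℝ :=
  fun j => ((psum t (Fin.last n) - psum t j) * x + psum t j * y) / psum t (Fin.last n)

/-- The lower Dinghas type derivative `D̲_{(t,ω*)} f(p)`: the limit, as `δ → 0⁺`, of
the infimum of `[x, ((T−s₁)x+s₁y)/T, …, y; f]_{ω*}` over `x,y ∈ I` with `x < y`,
`x ≤ p ≤ y`, `y − x < δ`; realized as a `liminf` (with values in `EReal`). -/
noncomputable def dinghasT {n : ℕ} (ω : Fin n → ℝ → ℝ) (ω' : ℝ → ℝ) (t : Fin n → ℝ)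
    (f : ℝ → ℝ) (I : Set ℝ) (p : ℝ) : EReal :=
  Filter.liminf (fun q : ℝ × ℝ => (divDiff ω ω' f (jpts t q.1 q.2) : EReal))
    (⨅ δ ∈ Set.Ioi (0 : ℝ), Filter.principal
      {q : ℝ × ℝ | q.1 ∈ I ∧ q.2 ∈ I ∧ q.1 < q.2 ∧ q.1 ≤ p ∧ p ≤ q.2 ∧ q.2 - q.1 < δ})

lemma Phi_snoc_expand {n : ℕ} (ω : Fin n → ℝ → ℝ) (f : ℝ → ℝ) (x : Fin (n + 1) → ℝ) :
    Phi (Fin.snoc ω f) x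
      = ∑ j : Fin (n + 1), (-1 : ℝ) ^ (n + (j : ℕ)) * f (x j) * Phi ω (x ∘ j.succAbove) := by
  unfold Phi
  rw [Matrix.det_succ_row _ (Fin.last n)]
  refine Finset.sum_congr rfl fun j _ => ?_
  have : (Matrix.of fun i j => (Fin.snoc ω f : Fin (n + 1) → ℝ → ℝ) i (x j)).submatrix
      (Fin.last n).succAbove j.succAbove
      = Matrix.of fun i k => ω i ((x ∘ j.succAbove) k) := by
    ext a b
    simp
  rw [this]
  simp

lemma Phi_snoc_self {n : ℕ} (ω : Fin n → ℝ → ℝ) (i : Fin n) (x : Fin (n + 1) → ℝ) :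
    Phi (Fin.snoc ω (ω i)) x = 0 := by
  unfold Phi
  refine Matrix.det_zero_of_row_eq (i := i.castSucc) (j := Fin.last n) (Fin.castSucc_lt_last i).ne ?_
  ext j
  simp

lemma Phi_snoc_add_mul {n : ℕ} (ω : Fin n → ℝ → ℝ) (f g : ℝ → ℝ) (c : ℝ) (x : Fin (n + 1) → ℝ) :
    Phi (Fin.snoc ω (fun t => f t + c * g t)) x
      = Phi (Fin.snoc ω f) x + c * Phi (Fin.snoc ω g) x := by
  simp only [Phi_snoc_expand, Finset.mul_sum, ← Finset.sum_add_distrib]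
  refine Finset.sum_congr rfl fun j _ => ?_
  ring

lemma Phi_snoc_sub_sum {n : ℕ} (ω : Fin n → ℝ → ℝ) (f : ℝ → ℝ) (c : Fin n → ℝ)
    (x : Fin (n + 1) → ℝ) :
    Phi (Fin.snoc ω (fun t => f t - ∑ i, c i * ω i t)) x = Phi (Fin.snoc ω f) x := by
  have h : ∀ i, ∑ j : Fin (n + 1), (-1 : ℝ) ^ (n + (j : ℕ)) * (c i * ω i (x j))
      * Phi ω (x ∘ j.succAbove) = 0 := by
    intro i
    have := Phi_snoc_self ω i x
    rw [Phi_snoc_expand] at this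
    rw [← mul_zero (c i), ← this, Finset.mul_sum]
    refine Finset.sum_congr rfl fun j _ => ?_
    ring
  simp only [Phi_snoc_expand, mul_sub, sub_mul, Finset.sum_sub_distrib, Finset.mul_sum,
    Finset.sum_mul]
  rw [Finset.sum_comm]
  simp [h]

lemma exists_interp {n : ℕ} (ω : Fin n → ℝ → ℝ) (y : Fin n → ℝ) (hy : 0 < Phi ω y) (f : ℝ → ℝ) :
    ∃ c : Fin n → ℝ, ∀ j, f (y j) - ∑ i, c i * ω i (y j) = 0 := by
  set M : Matrix (Fin n) (Fin n) ℝ := Matrix.of fun i j => ω i (y j) with hM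
  have hu : IsUnit M.det := (show M.det ≠ 0 from hy.ne').isUnit
  refine ⟨Matrix.vecMul (fun j => f (y j)) M⁻¹, fun j => ?_⟩
  have h : Matrix.vecMul (Matrix.vecMul (fun j => f (y j)) M⁻¹) M = fun j => f (y j) := by
    rw [Matrix.vecMul_vecMul, Matrix.nonsing_inv_mul _ hu, Matrix.vecMul_one]
  have h2 := congrFun h j
  simp only [Matrix.vecMul, dotProduct] at h2 ⊢
  rw [sub_eq_zero, ← h2]
  rfl

lemma Phi_remove {n : ℕ} (ω : Fin n → ℝ → ℝ) (H : Set ℝ) (hω : IsPosChebyshev ω H) (f : ℝ → ℝ)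
    (z : Fin (n + 2) → ℝ) (hz : StrictMono z) (hzH : ∀ j, z j ∈ H)
    (k : Fin (n + 2)) (hk0 : k ≠ 0) (hkl : k ≠ Fin.last (n + 1))
    (h1 : 0 ≤ Phi (Fin.snoc ω f) (z ∘ Fin.castSucc))
    (h2 : 0 ≤ Phi (Fin.snoc ω f) (z ∘ Fin.succ)) :
    0 ≤ Phi (Fin.snoc ω f) (z ∘ k.succAbove) := by
  have hP : 0 < Phi ω (fun j => z j.castSucc.succ) :=
    hω _ (fun a b hab => hz (by simpa using hab)) (fun j => hzH _)
  obtain ⟨c, hc⟩ := exists_interp ω _ hP f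
  rw [← Phi_snoc_sub_sum ω f c] at h1 h2 ⊢
  set g : ℝ → ℝ := fun t => f t - ∑ i, c i * ω i t with hg
  have hg0 : ∀ j : Fin (n + 2), j ≠ 0 → j ≠ Fin.last (n + 1) → g (z j) = 0 := by
    intro j hj0 hjl
    obtain ⟨i, rfl⟩ := Fin.exists_succ_eq.mpr hj0
    have : i ≠ Fin.last n := by
      rintro rfl; exact hjl (Fin.succ_last n)
    obtain ⟨m, rfl⟩ := Fin.exists_castSucc_eq.mpr this
    exact hc m
  rw [Phi_snoc_expand] at h1 h2 ⊢
  rw [Finset.sum_eq_single_of_mem (0 : Fin (n + 1)) (Finset.mem_univ _)] at h1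
  swap
  · intro b _ hb
    have : g ((z ∘ Fin.castSucc) b) = 0 := hg0 _ (by simpa using hb) (Fin.castSucc_lt_last b).ne
    rw [this]; ring
  rw [Finset.sum_eq_single_of_mem (Fin.last n) (Finset.mem_univ _)] at h2
  swap
  · intro b _ hb
    have : g ((z ∘ Fin.succ) b) = 0 := hg0 _ (Fin.succ_ne_zero b) (by
      rw [← Fin.succ_last]; simpa using hb)
    rw [this]; ring
  have e1 : ((z ∘ Fin.castSucc) ∘ (0 : Fin (n + 1)).succAbove) = fun j => z j.castSucc.succ := by
    ext j; simp
  have e2 : ((z ∘ Fin.succ) ∘ (Fin.last n).succAbove) = fun j => z j.castSucc.succ := by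
    ext j; simp
  rw [e1] at h1
  rw [e2] at h2
  have h1' := nonneg_of_mul_nonneg_left h1 hP
  have h2' := nonneg_of_mul_nonneg_left h2 hP
  refine Finset.sum_nonneg fun j _ => mul_nonneg ?_ (le_of_lt (hω _ ?_ fun _ => hzH _))
  · by_cases hj0 : k.succAbove j = 0
    · have : j = 0 := by
        rw [← Fin.succAbove_ne_zero_zero hk0] at hj0
        exact Fin.succAbove_right_injective hj0
      subst this
      simpa [hj0] using h1'
    by_cases hjl : k.succAbove j = Fin.last (n + 1)
    · have : j = Fin.last n := by
        rw [← Fin.succAbove_ne_last_last hkl] at hjl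
        exact Fin.succAbove_right_injective hjl
      subst this
      simpa [hjl] using h2'
    · have : g ((z ∘ k.succAbove) j) = 0 := hg0 _ hj0 hjl
      rw [this]; simp
  · exact (hz.comp (Fin.strictMono_succAbove k)).comp (Fin.strictMono_succAbove j)

lemma Phi_subseq {n : ℕ} (ω : Fin n → ℝ → ℝ) (H : Set ℝ) (hω : IsPosChebyshev ω H) (f : ℝ → ℝ)
    (z : ℕ → ℝ) (hz : StrictMono z) (N : ℕ) (hzH : ∀ a ≤ N, z a ∈ H)
    (hcons : ∀ a, a + n ≤ N → 0 ≤ Phi (Fin.snoc ω f) (fun j : Fin (n + 1) => z (a + j))) :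
    ∀ d : ℕ, ∀ e : Fin (n + 1) → ℕ, StrictMono e → e (Fin.last n) ≤ N →
      e (Fin.last n) - e 0 ≤ d → 0 ≤ Phi (Fin.snoc ω f) (fun j => z (e j)) := by
  intro d
  induction d with
  | zero =>
    intro e he hN hd
    have hall : ∀ j, e j = e 0 + j := by
      intro j
      have h1 := he.monotone (Fin.zero_le j)
      have h2 := he.monotone (Fin.le_last j)
      have h3 : e 0 = e j := by omega
      have := he.injective h3
      subst this
      simp
    have := hcons (e 0) (by have := hall (Fin.last n); simp at this; omega)
    convert this using 3
    exact congrArg z (hall _)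
  | succ d ih =>
    intro e he hN hd
    by_cases hgap : ∀ j : Fin n, e j.succ ≤ e j.castSucc + 1
    · have hall : ∀ j, e j = e 0 + j := by
        intro j
        induction j using Fin.induction with
        | zero => simp
        | succ i hi =>
          have h1 := hgap i
          have h2 := he (Fin.castSucc_lt_succ (i := i))
          simp at hi ⊢
          omega
      have := hcons (e 0) (by have := hall (Fin.last n); simp at this; omega)
      convert this using 3
      exact congrArg z (hall _)
    · push Not at hgap
      obtain ⟨j, hj⟩ := hgap
      set k : Fin (n + 2) := j.succ.castSucc with hk
      set e' : Fin (n + 2) → ℕ := Fin.insertNth k (e j.castSucc + 1) e with he'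
      have hek : e' k = e j.castSucc + 1 := by simp [he']
      have hes : ∀ i, e' (k.succAbove i) = e i := by intro i; simp [he']
      have hk0 : k ≠ 0 := by simp [hk, Fin.ext_iff]
      have hkl : k ≠ Fin.last (n + 1) := (Fin.castSucc_lt_last _).ne
      have hmono : StrictMono e' := by
        intro a b hab
        rcases Fin.eq_self_or_eq_succAbove k a with rfl | ⟨a, rfl⟩
        · rcases Fin.eq_self_or_eq_succAbove k b with rfl | ⟨b, rfl⟩
          · exact absurd hab (lt_irrefl _)
          · rw [hek, hes]
            rw [Fin.lt_succAbove_iff_le_castSucc] at hab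
            have : j.succ ≤ b := by
              rw [hk, Fin.le_def] at hab
              rw [Fin.le_def]
              simp at hab ⊢
              omega
            have := he.monotone this
            omega
        · rcases Fin.eq_self_or_eq_succAbove k b with rfl | ⟨b, rfl⟩
          · rw [hek, hes]
            rw [Fin.succAbove_lt_iff_castSucc_lt] at hab
            have : a ≤ j.castSucc := by
              rw [hk, Fin.lt_def] at hab
              rw [Fin.le_def]
              simp at hab ⊢
              omega
            have := he.monotone this
            omega
          · rw [hes, hes]
            exact he ((Fin.strictMono_succAbove k).lt_iff_lt.mp hab)
      have e0 : e' 0 = e 0 := by rw [← Fin.succAbove_ne_zero_zero hk0, hes]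
      have el : e' (Fin.last (n + 1)) = e (Fin.last n) := by
        rw [← Fin.succAbove_ne_last_last hkl, hes]
      have hlt1 : e' (Fin.last n).castSucc < e' (Fin.last (n + 1)) :=
        hmono (Fin.castSucc_lt_last _)
      have hlt2 : e' 0 < e' (Fin.succ 0) := hmono (Fin.succ_pos _)
      have hfin : 0 ≤ Phi (Fin.snoc ω f) ((fun i => z (e' i)) ∘ k.succAbove) := by
        refine Phi_remove ω H hω f (fun i => z (e' i)) (hz.comp hmono) ?_ k hk0 hkl ?_ ?_
        · intro i
          refine hzH _ ?_
          have := hmono.monotone (Fin.le_last i)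
          omega
        · refine ih (fun i => e' i.castSucc) (fun a b hab => hmono (by simpa using hab)) (by omega) ?_
          simp only [Fin.castSucc_zero]
          omega
        · refine ih (fun i => e' i.succ) (fun a b hab => hmono (by simpa using hab)) ?_ ?_
          · show e' (Fin.last (n + 1)) ≤ N
            omega
          · show e' (Fin.last (n + 1)) - e' (Fin.succ 0) ≤ d
            omega
      convert hfin using 2
      ext i
      simp [hes]

lemma psum_one {n : ℕ} (j : Fin (n + 1)) : psum (fun _ : Fin n => (1 : ℝ)) j = (j : ℕ) := by
  unfold psum
  rw [Finset.sum_const, nsmul_eq_mul, mul_one]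
  congr 1
  have := Fin.card_filter_val_lt (n := n) (m := (j : ℕ))
  rw [this]
  have := j.isLt
  omega

lemma jpts_one {n : ℕ} (hn : 0 < n) (x y : ℝ) :
    jpts (fun _ : Fin n => (1 : ℝ)) x y = fun j : Fin (n + 1) => x + ((j : ℕ) : ℝ) * ((y - x) / n) := by
  ext j
  have : (n : ℝ) ≠ 0 := by positivity
  simp only [jpts, psum_one, Fin.val_last]
  field_simp
  ring

lemma bisect {n : ℕ} (hn : 0 < n) (ω : Fin n → ℝ → ℝ) (I : Set ℝ) (hI : I.OrdConnected)
    (hω : IsPosChebyshev ω I) (f : ℝ → ℝ) (x y : ℝ) (hx : x ∈ I) (hy : y ∈ I) (hxy : x < y)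
    (hneg : Phi (Fin.snoc ω f) (jpts (fun _ : Fin n => (1 : ℝ)) x y) < 0) :
    ∃ x' y', x ≤ x' ∧ y' ≤ y ∧ y' - x' = (y - x) / 2 ∧
      Phi (Fin.snoc ω f) (jpts (fun _ : Fin n => (1 : ℝ)) x' y') < 0 := by
  by_contra! hcon
  have hn' : (0 : ℝ) < n := by exact_mod_cast hn
  set h : ℝ := (y - x) / (2 * n) with hh
  have hpos : 0 < h := div_pos (by linarith) (by positivity)
  have hnh : 2 * n * h = y - x := by rw [hh]; field_simp
  refine absurd hneg (not_lt.mpr ?_)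
  have key := Phi_subseq ω I hω f (fun a => x + a * h)
    (fun a b hab => by
      have : (a : ℝ) < b := by exact_mod_cast hab
      have := mul_lt_mul_of_pos_right this hpos
      simpa using this) (2 * n)
    (fun a ha => by
      have h1 : (a : ℝ) ≤ 2 * n := by exact_mod_cast ha
      have h2 := mul_le_mul_of_nonneg_right h1 hpos.le
      have h3 : 0 ≤ (a : ℝ) * h := by positivity
      exact hI.out hx hy ⟨by linarith, by linarith⟩)
    (fun a ha => by
      have h1 : (a : ℝ) + n ≤ 2 * n := by exact_mod_cast ha
      have h2 := mul_le_mul_of_nonneg_right h1 hpos.le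
      have h3 : 0 ≤ (a : ℝ) * h := by positivity
      have := hcon (x + a * h) (x + a * h + n * h) (by linarith) (by linarith) (by linarith)
      rw [jpts_one hn] at this
      refine this.trans_eq (congrArg _ (funext fun j => ?_))
      push_cast
      field_simp
      ring)
    (2 * n) (fun j => 2 * (j : ℕ)) (fun a b hab => by
      have : (a : ℕ) < b := hab
      show 2 * (a : ℕ) < 2 * b
      omega) (by simp) (by simp)
  rw [jpts_one hn]
  refine key.trans_eq (congrArg _ (funext fun j => ?_))
  rw [hh]
  push_cast
  field_simp

lemma mem_dinghas_filter (I : Set ℝ) (p : ℝ) (S : Set (ℝ × ℝ)) :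
    S ∈ (⨅ δ ∈ Set.Ioi (0 : ℝ), Filter.principal
      {q : ℝ × ℝ | q.1 ∈ I ∧ q.2 ∈ I ∧ q.1 < q.2 ∧ q.1 ≤ p ∧ p ≤ q.2 ∧ q.2 - q.1 < δ}) ↔
    ∃ δ > 0, {q : ℝ × ℝ | q.1 ∈ I ∧ q.2 ∈ I ∧ q.1 < q.2 ∧ q.1 ≤ p ∧ p ≤ q.2 ∧ q.2 - q.1 < δ}
      ⊆ S := by
  rw [Filter.mem_biInf_of_directed]
  · simp
  · intro a ha b hb
    refine ⟨min a b, Set.mem_Ioi.mpr (lt_min (Set.mem_Ioi.mp ha) (Set.mem_Ioi.mp hb)), ?_, ?_⟩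
    · simp only [ge_iff_le, Order.Preimage, Filter.le_principal_iff, Filter.mem_principal]
      rintro q ⟨h1, h2, h3, h4, h5, h6⟩
      exact ⟨h1, h2, h3, h4, h5, h6.trans_le (min_le_left _ _)⟩
    · simp only [ge_iff_le, Order.Preimage, Filter.le_principal_iff, Filter.mem_principal]
      rintro q ⟨h1, h2, h3, h4, h5, h6⟩
      exact ⟨h1, h2, h3, h4, h5, h6.trans_le (min_le_right _ _)⟩
  · exact ⟨1, Set.mem_Ioi.mpr one_pos⟩

lemma jpts_pos {n : ℕ} (hn : 0 < n) (I : Set ℝ) (hI : I.OrdConnected)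
    (ω : Fin (n + 1) → ℝ → ℝ) (hω : IsPosChebyshev ω I) (x y : ℝ) (hx : x ∈ I) (hy : y ∈ I)
    (hxy : x < y) : 0 < Phi ω (jpts (fun _ : Fin n => (1 : ℝ)) x y) := by
  have hn' : (0 : ℝ) < n := by exact_mod_cast hn
  have hpos : 0 < (y - x) / n := div_pos (by linarith) hn'
  rw [jpts_one hn]
  refine hω _ ?_ ?_
  · intro a b hab
    have : ((a : ℕ) : ℝ) < (b : ℕ) := by exact_mod_cast hab
    have := mul_lt_mul_of_pos_right this hpos
    simpa using this
  · intro j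
    have h1 : ((j : ℕ) : ℝ) ≤ n := by exact_mod_cast Nat.lt_succ_iff.mp j.isLt
    have h2 := mul_le_mul_of_nonneg_right h1 hpos.le
    have h3 : 0 ≤ ((j : ℕ) : ℝ) * ((y - x) / n) := by positivity
    have h4 : (n : ℝ) * ((y - x) / n) = y - x := by field_simp
    exact hI.out hx hy ⟨by linarith, by linarith⟩

lemma nested {n : ℕ} (hn : 0 < n) (ω : Fin n → ℝ → ℝ) (I : Set ℝ) (hI : I.OrdConnected)
    (hω : IsPosChebyshev ω I) (f : ℝ → ℝ) (x y : ℝ) (hx : x ∈ I) (hy : y ∈ I) (hxy : x < y)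
    (hneg : Phi (Fin.snoc ω f) (jpts (fun _ : Fin n => (1 : ℝ)) x y) < 0) :
    ∃ p ∈ I, ∀ δ > 0, ∃ a ∈ I, ∃ b ∈ I, a < b ∧ a ≤ p ∧ p ≤ b ∧ b - a < δ ∧
      Phi (Fin.snoc ω f) (jpts (fun _ : Fin n => (1 : ℝ)) a b) < 0 := by
  let Good : ℝ × ℝ → Prop := fun q => q.1 ∈ I ∧ q.2 ∈ I ∧ q.1 < q.2 ∧
    Phi (Fin.snoc ω f) (jpts (fun _ : Fin n => (1 : ℝ)) q.1 q.2) < 0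
  have step : ∀ q : {q // Good q}, ∃ r : {q // Good q}, q.1.1 ≤ r.1.1 ∧ r.1.2 ≤ q.1.2 ∧
      r.1.2 - r.1.1 = (q.1.2 - q.1.1) / 2 := by
    rintro ⟨⟨a, b⟩, ha, hb, hab, hq⟩
    simp only at ha hb hab hq
    obtain ⟨a', b', h1, h2, h3, h4⟩ := bisect hn ω I hI hω f a b ha hb hab hq
    exact ⟨⟨(a', b'), hI.out ha hb ⟨h1, by linarith⟩, hI.out ha hb ⟨by linarith, h2⟩,
      by show a' < b'; linarith, h4⟩, h1, h2, h3⟩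
  choose s hs1 hs2 hs3 using step
  let u : ℕ → {q // Good q} := fun k => s^[k] ⟨(x, y), hx, hy, hxy, hneg⟩
  have hu : ∀ k, u (k + 1) = s (u k) := fun k => Function.iterate_succ_apply' s k _
  have hmono : Monotone fun k => (u k).1.1 := monotone_nat_of_le_succ fun k => by
    rw [hu]; exact hs1 _
  have hanti : Antitone fun k => (u k).1.2 := antitone_nat_of_succ_le fun k => by
    rw [hu]; exact hs2 _
  have hlen : ∀ k, (u k).1.2 - (u k).1.1 = (y - x) * (1 / 2) ^ k := by
    intro k
    induction k with
    | zero => simp [u]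
    | succ k ih => rw [hu, hs3, ih]; ring
  have hp := hmono.ciSup_mem_iInter_Icc_of_antitone hanti (fun k => (u k).2.2.2.1.le)
  rw [Set.mem_iInter] at hp
  refine ⟨_, hI.out hx hy (hp 0), fun δ hδ => ?_⟩
  have hyx : 0 < y - x := by linarith
  obtain ⟨k, hk⟩ := exists_pow_lt_of_lt_one (div_pos hδ hyx) (by norm_num : (1 / 2 : ℝ) < 1)
  refine ⟨(u k).1.1, (u k).2.1, (u k).1.2, (u k).2.2.1, (u k).2.2.2.1, (hp k).1, (hp k).2, ?_,
    (u k).2.2.2.2⟩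
  rw [hlen, mul_comm]
  exact (lt_div_iff₀ hyx).mp hk

/-- **Corollary 8.** `f` is `ω`-Jensen convex on `I` (i.e. `(𝟏ₙ,ω)`-convex) if and
only if the lower Dinghas type derivative `D̲_{(𝟏ₙ,ω*)} f(p)` is nonnegative at every
point `p ∈ I`. -/
theorem jensenConvexOn_iff_dinghasT_nonneg
    (n : ℕ) (hn : 0 < n) (I : Set ℝ) (hI : I.OrdConnected)
    (hne : ∃ a ∈ I, ∃ b ∈ I, a < b)
    (ω : Fin n → ℝ → ℝ) (ω' : ℝ → ℝ)
    (hω : IsPosChebyshev ω I) (hωs : IsPosChebyshev (Fin.snoc ω ω') I)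
    (f : ℝ → ℝ) :
    TOmegaConvexOn ω (fun _ => (1 : ℝ)) I f ↔
      ∀ p ∈ I, 0 ≤ dinghasT ω ω' (fun _ => (1 : ℝ)) f I p := by
  have hn' : (0 : ℝ) < n := by exact_mod_cast hn
  constructor
  · intro hf p _
    refine Filter.le_liminf_of_le (by isBoundedDefault) ?_
    refine (mem_dinghas_filter I p _).mpr ⟨1, one_pos, ?_⟩
    rintro ⟨x, y⟩ ⟨hx, hy, hxy, -, -, -⟩
    simp only at hx hy hxy
    have h1 := jpts_pos hn I hI _ hωs x y hx hy hxy
    have h2 : 0 ≤ Phi (Fin.snoc ω f) (jpts (fun _ : Fin n => (1 : ℝ)) x y) := by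
      have := hf x hx ((y - x) / n) (div_pos (by linarith) hn') (by
        rw [psum_one, Fin.val_last]
        convert hy using 1
        field_simp
        ring)
      rw [jpts_one hn]
      simpa only [psum_one] using this
    show (0 : EReal) ≤ ((divDiff ω ω' f (jpts (fun _ : Fin n => (1 : ℝ)) x y) : ℝ) : EReal)
    exact_mod_cast div_nonneg h2 h1.le
  · intro hD x hx h hh hy
    by_contra! hneg
    set y := x + psum (fun _ : Fin n => (1 : ℝ)) (Fin.last n) * h with hydef
    have hyn : y = x + n * h := by rw [hydef, psum_one, Fin.val_last]
    have hxy : x < y := by rw [hyn]; nlinarith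
    have hpts : (fun j => x + psum (fun _ : Fin n => (1 : ℝ)) j * h)
        = jpts (fun _ : Fin n => (1 : ℝ)) x y := by
      rw [jpts_one hn]
      ext j
      rw [psum_one, hyn]
      field_simp
      ring
    rw [hpts] at hneg
    have hpos := jpts_pos hn I hI _ hωs x y hx hy hxy
    set A := Phi (Fin.snoc ω f) (jpts (fun _ : Fin n => (1 : ℝ)) x y) with hA
    set B := Phi (Fin.snoc ω ω') (jpts (fun _ : Fin n => (1 : ℝ)) x y) with hB
    set c : ℝ := -A / (2 * B) with hc
    have hcpos : 0 < c := div_pos (by linarith) (by linarith)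
    have hcB : c * B = -A / 2 := by rw [hc]; field_simp
    obtain ⟨p, hp, hall⟩ := nested hn ω I hI hω (fun t => f t + c * ω' t) x y hx hy hxy (by
      rw [Phi_snoc_add_mul, ← hA, ← hB, hcB]; linarith)
    have hlt : ((-c : ℝ) : EReal) < dinghasT ω ω' (fun _ => (1 : ℝ)) f I p :=
      lt_of_lt_of_le (by exact_mod_cast (neg_lt_zero.mpr hcpos)) (hD p hp)
    have hev := Filter.eventually_lt_of_lt_liminf hlt
    obtain ⟨δ, hδ, hsub⟩ := (mem_dinghas_filter I p _).mp hev
    obtain ⟨a, ha, b, hb, hab, hap, hpb, hbd, hab'⟩ := hall δ hδ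
    have hm : ((-c : ℝ) : EReal)
        < ((divDiff ω ω' f (jpts (fun _ : Fin n => (1 : ℝ)) a b) : ℝ) : EReal) :=
      hsub (show (a, b) ∈ _ from ⟨ha, hb, hab, hap, hpb, hbd⟩)
    have hm' : -c < divDiff ω ω' f (jpts (fun _ : Fin n => (1 : ℝ)) a b) := by exact_mod_cast hm
    have hpos' := jpts_pos hn I hI _ hωs a b ha hb hab
    rw [divDiff, lt_div_iff₀ hpos'] at hm'
    rw [Phi_snoc_add_mul] at hab'
    linarith
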